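/- Let A ⊆ B be an inclusion of unital C*-algebras with A a closed *-subalgebra of B containing the unit 1_B. Suppose that for all positive x, y ∈ A with x·y = 0 and every ε > 0 there exists a projection p ∈ B such that ‖p·x − x‖ ≤ ε and ‖(1−p)·y − y‖ ≤ ε. Then for every self-adjoint a ∈ A and every ε > 0 there exists a self-adjoint b ∈ B with finite spectrum such that ‖a − b‖ ≤ ε. -/

import Mathlib

/-- A projection in a C*-algebra: a self-adjoint idempotent. -/
def IsProjection {B : Type*} [Mul B] [Star B] (p : B) : Prop := star p = p ∧ p * p = p

/-!
Cutting the real line between `s < t`, the hypothesis provides a projection that nearly dominates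
the part of `a` above `t` and is nearly orthogonal to the part below `s`. Compressing it by the
corresponding bump functions of `a` makes both relations exact while moving it by less than `1 / 2`,
so a spectral projection of the compression satisfies them exactly. Cuts over disjoint intervals are
then linearly ordered, hence commute, and a step function built from a fine arithmetic progression
of them has finite spectrum and is squeezed between two translates of `a`.
-/

theorem isProjection_iff_isStarProjection {B : Type*} [Mul B] [Star B] {p : B} :
    IsProjection p ↔ IsStarProjection p :=
  ⟨fun h => ⟨h.2, h.1⟩, fun h => ⟨h.2, h.1⟩⟩

section FiniteSpectrum

theorem isIntegral_sum_of_commute {R A ι : Type*} [CommRing R] [Ring A] [Algebra R A] {f : ι → A}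
    (s : Finset ι) (hcomm : ∀ i j, Commute (f i) (f j)) (hf : ∀ i, IsIntegral R (f i)) :
    IsIntegral R (∑ i ∈ s, f i) := by
  open scoped IsMulCommutative in
  let S := Algebra.adjoin R (Set.range f)
  have : IsMulCommutative S := Algebra.isMulCommutative_adjoin R <| by
    rintro _ ⟨i, rfl⟩ _ ⟨j, rfl⟩
    exact hcomm i j
  let g (i : ι) : S := ⟨f i, Algebra.subset_adjoin ⟨i, rfl⟩⟩
  have hg (i : ι) : IsIntegral R (g i) :=
    (isIntegral_algHom_iff S.val Subtype.val_injective).1 (hf i)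
  have hsum : IsIntegral R (∑ i ∈ s, g i) := IsIntegral.sum g fun i _ => hg i
  simpa [g] using hsum.map S.val

theorem finite_spectrum_of_isIntegral {𝕜 A : Type*} [Field 𝕜] [Ring A] [Algebra 𝕜 A] {a : A}
    (ha : IsIntegral 𝕜 a) : (spectrum 𝕜 a).Finite := by
  nontriviality A
  refine (minpoly 𝕜 a).rootSet_finite 𝕜 |>.subset fun z hz => ?_
  have hmem := spectrum.subset_polynomial_aeval a (minpoly 𝕜 a) ⟨z, hz, rfl⟩
  rw [minpoly.aeval, spectrum.zero_eq] at hmem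
  exact (Polynomial.mem_rootSet_of_ne (minpoly.ne_zero ha)).2 (by simpa using hmem)

theorem isIntegral_of_isIdempotentElem {R A : Type*} [CommRing R] [Ring A] [Algebra R A] {p : A}
    (hp : IsIdempotentElem p) : IsIntegral R p := by
  nontriviality R
  refine ⟨Polynomial.X ^ 2 - Polynomial.X, Polynomial.monic_X_pow_sub (by simp), ?_⟩
  simp [sq, hp.eq]

end FiniteSpectrum

section FunctionalCalculus

open scoped ContinuousFunctionalCalculus in
theorem cfc_mul_of_mul_eq_smul {A : Type*} [Ring A] [StarRing A] [TopologicalSpace A]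
    [IsTopologicalRing A] [T2Space A] [Algebra ℝ A] [ContinuousSMul ℝ A]
    [ContinuousFunctionalCalculus ℝ A IsSelfAdjoint] {k v : A} {r : ℝ} (hk : IsSelfAdjoint k)
    (h : k * v = r • v) {f : ℝ → ℝ} (hf : ContinuousOn f (spectrum ℝ k)) :
    cfc f k * v = f r • v := by
  by_cases hr : r ∈ spectrum ℝ k
  · suffices ∀ g : C(spectrum ℝ k, ℝ), cfcHom hk g * v = g ⟨r, hr⟩ • v by
      rw [cfc_apply f k]
      exact this _
    intro g
    induction g using ContinuousMap.induction_on_of_compact with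
    | const c =>
      have hconst : ContinuousMap.const (spectrum ℝ k) c = algebraMap ℝ _ c := rfl
      rw [hconst, AlgHomClass.commutes, ← Algebra.smul_def]
      rfl
    | id => simpa [cfcHom_id hk] using h
    | star_id => simpa [cfcHom_id hk, hk.star_eq] using h
    | add g₁ g₂ h₁ h₂ => rw [map_add, add_mul, h₁, h₂, ContinuousMap.add_apply, add_smul]
    | mul g₁ g₂ h₁ h₂ =>
      rw [map_mul, mul_assoc, h₂, mul_smul_comm, h₁, ContinuousMap.mul_apply, smul_smul, mul_comm]
    | frequently g hg =>
      have := cfcHom_continuous (R := ℝ) hk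
      exact hg.mem_of_closed <| isClosed_eq (by fun_prop) (by fun_prop)
  · have hv : (algebraMap ℝ A r - k) * v = 0 := by
      rw [sub_mul, h, ← Algebra.smul_def, sub_self]
    rw [(spectrum.notMem_iff.1 hr).mul_right_eq_zero.1 hv, mul_zero, smul_zero]

variable {B : Type*} [CStarAlgebra B]

theorem norm_le_of_mem_Icc_algebraMap [PartialOrder B] [StarOrderedRing B] {y : B} {r : ℝ}
    (hr : 0 ≤ r) (hy : IsSelfAdjoint y) (h : y ∈ Set.Icc (-algebraMap ℝ B r) (algebraMap ℝ B r)) :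
    ‖y‖ ≤ r := by
  rw [← map_neg, Set.mem_Icc, algebraMap_le_iff_le_spectrum, le_algebraMap_iff_spectrum_le] at h
  rw [← cfc_id' ℝ y]
  exact norm_cfc_le hr fun u hu => abs_le.2 ⟨h.1 u hu, h.2 u hu⟩

end FunctionalCalculus

section Perturbation

theorem norm_sub_compression_le {R : Type*} [NormedRing R] [StarRing R] [NormedStarGroup R]
    {b x : R} (hb : IsSelfAdjoint b) (hx : IsSelfAdjoint x) (hx1 : ‖1 - x‖ ≤ 1) :
    ‖b - (1 - x) * b * (1 - x)‖ ≤ 2 * ‖b * x‖ := by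
  have hxb : ‖x * b‖ = ‖b * x‖ := by
    rw [← norm_star, star_mul, hx.star_eq, hb.star_eq]
  calc ‖b - (1 - x) * b * (1 - x)‖
      = ‖b * x + x * b * (1 - x)‖ := by congr 1; noncomm_ring
    _ ≤ ‖b * x‖ + ‖x * b‖ * 1 := norm_add_le_of_le le_rfl (norm_mul_le_of_le le_rfl hx1)
    _ = 2 * ‖b * x‖ := by rw [hxb]; ring

variable {B : Type*} [CStarAlgebra B]

theorem half_notMem_spectrum_of_norm_sub_lt {p k : B} (hp : IsStarProjection p)
    (hpk : ‖p - k‖ < 1 / 2) : (1 / 2 : ℝ) ∉ spectrum ℝ k := by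
  nontriviality B
  let w : unitary B := ⟨2 * p - 1, hp.two_mul_sub_one_mem_unitary⟩
  let u : Bˣ := Unitary.toUnits w
  have hu : ‖(↑u⁻¹ : B)‖ = 1 := CStarRing.norm_coe_unitary w⁻¹
  have hdist : ‖(2 * k - 1) - (u : B)‖ < ‖(↑u⁻¹ : B)‖⁻¹ := by
    have : (2 * k - 1) - (u : B) = (2 : ℝ) • (k - p) := by
      change 2 * k - 1 - (2 * p - 1) = _
      rw [two_mul, two_mul]
      module
    rw [this, hu, norm_smul, norm_sub_rev, Real.norm_ofNat]
    linarith
  have hunit : IsUnit (2 * k - 1) := (u.ofNearby _ hdist).isUnit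
  have : algebraMap ℝ B (1 / 2) - k = Units.mk0 (-(1 / 2) : ℝ) (by norm_num) • (2 * k - 1) := by
    rw [Units.smul_mk0, two_mul, Algebra.algebraMap_eq_smul_one]
    module
  rw [spectrum.notMem_iff, this]
  exact hunit.smul _

theorem exists_isStarProjection_of_half_notMem_spectrum {k : B} (hk : IsSelfAdjoint k)
    (hhalf : (1 / 2 : ℝ) ∉ spectrum ℝ k) :
    ∃ q : B, IsStarProjection q ∧ ∀ v, (k * v = v → q * v = v) ∧ (k * v = 0 → q * v = 0) := by
  let f (u : ℝ) : ℝ := if 1 / 2 < u then 1 else 0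
  have hf : ContinuousOn f (spectrum ℝ k) := by
    refine ContinuousOn.if ?_ continuousOn_const continuousOn_const
    intro u hu
    have hu' : u ∈ frontier (Set.Ioi (1 / 2 : ℝ)) := hu.2
    rw [frontier_Ioi, Set.mem_singleton_iff] at hu'
    exact absurd (hu' ▸ hu.1) hhalf
  refine ⟨cfc f k, ⟨?_, cfc_predicate _ _⟩, fun v => ⟨fun hv => ?_, fun hv => ?_⟩⟩
  · rw [IsIdempotentElem, ← cfc_mul f f k]
    simp only [f, mul_ite, mul_one, mul_zero, ← ite_and, and_self]
  · have hf1 : f 1 = 1 := if_pos one_half_lt_one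
    rw [cfc_mul_of_mul_eq_smul hk (hv.trans (one_smul ℝ v).symm) hf, hf1, one_smul]
  · have hf0 : f 0 = 0 := if_neg one_half_pos.le.not_gt
    rw [cfc_mul_of_mul_eq_smul hk (hv.trans (zero_smul ℝ v).symm) hf, hf0, zero_smul]

theorem exists_isStarProjection_separating {x y p : B} (hx : IsSelfAdjoint x)
    (hy : IsSelfAdjoint y) (hxy : x * y = 0) (hx1 : ‖1 - x‖ ≤ 1) (hy1 : ‖1 - y‖ ≤ 1)
    (hp : IsStarProjection p) (hpx : ‖(1 - p) * x‖ < 1 / 8) (hpy : ‖p * y‖ < 1 / 8) :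
    ∃ q : B, IsStarProjection q ∧ ∀ v, (x * v = v → q * v = v) ∧ (y * v = v → q * v = 0) := by
  have hyx : y * x = 0 := by simpa [hx.star_eq, hy.star_eq] using congr(star $hxy)
  set k₀ := (1 - y) * p * (1 - y) with hk₀
  set k := 1 - (1 - x) * (1 - k₀) * (1 - x) with hk
  have hk₀s : IsSelfAdjoint k₀ := hp.isSelfAdjoint.conjugate_self ((IsSelfAdjoint.one B).sub hy)
  have hks : IsSelfAdjoint k :=
    (IsSelfAdjoint.one B).sub <|
      ((IsSelfAdjoint.one B).sub hk₀s).conjugate_self ((IsSelfAdjoint.one B).sub hx)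
  have hk₀x : ‖(1 - k₀) * x‖ ≤ ‖(1 - p) * x‖ := by
    have : (1 - k₀) * x = (1 - y) * ((1 - p) * x) := by
      simp only [hk₀, mul_sub, sub_mul, mul_one, one_mul, mul_assoc, hyx, mul_zero, sub_zero]
    rw [this]
    exact (norm_mul_le _ _).trans (mul_le_of_le_one_left (norm_nonneg _) hy1)
  have hpk : ‖p - k‖ < 1 / 2 := by
    have h₁ := norm_sub_compression_le hp.isSelfAdjoint hy hy1
    have h₂ := norm_sub_compression_le ((IsSelfAdjoint.one B).sub hk₀s) hx hx1
    calc ‖p - k‖ = ‖(p - k₀) - ((1 - k₀) - (1 - x) * (1 - k₀) * (1 - x))‖ := by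
          congr 1; rw [hk]; abel
      _ ≤ ‖p - k₀‖ + ‖(1 - k₀) - (1 - x) * (1 - k₀) * (1 - x)‖ := norm_sub_le _ _
      _ < 1 / 2 := by linarith
  obtain ⟨q, hq, hqv⟩ := exists_isStarProjection_of_half_notMem_spectrum hks
    (half_notMem_spectrum_of_norm_sub_lt hp hpk)
  refine ⟨q, hq, fun v => ⟨fun hv => (hqv v).1 ?_, fun hv => (hqv v).2 ?_⟩⟩
  · rw [hk, sub_mul, mul_assoc, sub_mul 1 x v, hv]
    simp
  · have hxv : x * v = 0 := by rw [← hv, ← mul_assoc, hxy, zero_mul]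
    have hk₀v : k₀ * v = 0 := by rw [hk₀, mul_assoc, sub_mul 1 y v, hv]; simp
    simp [hk, sub_mul, mul_sub, mul_assoc, hxv, hk₀v]

end Perturbation

section Ramp

/-- The piecewise linear function that is `0` up to `s`, `1` from `t` on, and affine in between;
it is meant for `s < t`. -/
noncomputable def ramp (s t u : ℝ) : ℝ := max 0 (min 1 ((u - s) / (t - s)))

@[fun_prop]
theorem continuous_ramp (s t : ℝ) : Continuous (ramp s t) := by
  unfold ramp
  fun_prop

theorem ramp_nonneg (s t u : ℝ) : 0 ≤ ramp s t u := le_max_left _ _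

theorem ramp_le_one (s t u : ℝ) : ramp s t u ≤ 1 := max_le zero_le_one (min_le_left _ _)

variable {s t u : ℝ}

theorem ramp_eq_zero (hst : s < t) (hu : u ≤ s) : ramp s t u = 0 :=
  max_eq_left <| (min_le_right _ _).trans <|
    div_nonpos_of_nonpos_of_nonneg (sub_nonpos.2 hu) (sub_nonneg.2 hst.le)

theorem ramp_eq_one (hst : s < t) (hu : t ≤ u) : ramp s t u = 1 := by
  have : 1 ≤ (u - s) / (t - s) := by
    rw [one_le_div (sub_pos.2 hst)]
    gcongr
  rw [ramp, min_eq_left this, max_eq_right zero_le_one]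

theorem sum_mul_ramp {δ : ℝ} (hδ : 0 < δ) (c u : ℝ) (n : ℕ) :
    ∑ j ∈ Finset.range n, δ * ramp (c + j * δ) (c + j * δ + δ) u =
      max 0 (min (n * δ) (u - c)) := by
  induction n with
  | zero => simp
  | succ n ih =>
    have hn : 0 ≤ n * δ := by positivity
    have hlt : c + n * δ < c + n * δ + δ := by linarith
    rw [Finset.sum_range_succ, ih, Nat.cast_succ, add_one_mul]
    rcases le_total u (c + n * δ) with hu | hu
    · rw [ramp_eq_zero hlt hu, mul_zero, add_zero, min_eq_right (by linarith),
        min_eq_right (by linarith)]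
    · have hdiv : 0 ≤ (u - (c + n * δ)) / δ := div_nonneg (sub_nonneg.2 hu) hδ.le
      rw [min_eq_left (by linarith), max_eq_right hn, max_eq_right (le_min (by linarith)
        (by linarith)), ramp, add_sub_cancel_left, max_eq_right (le_min zero_le_one hdiv),
        mul_min_of_nonneg _ _ hδ.le, mul_div_cancel₀ _ hδ.ne', ← min_add_add_left]
      ring_nf

end Ramp

section SpectralCut

variable {B : Type*} [CStarAlgebra B]

theorem le_of_isStarProjection_of_mul_eq_right [PartialOrder B] [StarOrderedRing B] {p v : B}
    (hp : IsStarProjection p) (hv : IsSelfAdjoint v) (hv1 : v ≤ 1) (hpv : p * v = v) : v ≤ p := by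
  have hvp : v * p = v := by
    simpa [hv.star_eq, hp.isSelfAdjoint.star_eq] using congr(star $hpv)
  calc v = p * v * p := by rw [hpv, hvp]
    _ ≤ p * 1 * p := hp.isSelfAdjoint.conjugate_le_conjugate hv1
    _ = p := by rw [mul_one, hp.isIdempotentElem.eq]

/-- A projection `p` cutting the spectrum of `a` between `s` and `t`: it dominates the part of `a`
above `t` and is orthogonal to the part below `s`. It replaces the spectral projection of `a` for
`(t, ∞)`, which need not lie in the algebra; both conditions are tested on continuous functions
of `a`. -/
structure IsSpectralCut (a : B) (s t : ℝ) (p : B) : Prop where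
  isStarProjection : IsStarProjection p
  mul_cfc_eq_self : ∀ f : ℝ → ℝ, Continuous f → (∀ u ≤ t, f u = 0) → p * cfc f a = cfc f a
  mul_cfc_eq_zero : ∀ f : ℝ → ℝ, Continuous f → (∀ u, s ≤ u → f u = 0) → p * cfc f a = 0

namespace IsSpectralCut

variable {a p q : B} {s t s' t' : ℝ}

theorem mul_eq_right (ha : IsSelfAdjoint a) (hp : IsSpectralCut a s t p)
    (hq : IsSpectralCut a s' t' q) (h : t < s') : p * q = q := by
  set v := cfc (ramp t s') a with hv
  have hpv : p * v = v :=
    hp.mul_cfc_eq_self _ (continuous_ramp t s') fun u hu => ramp_eq_zero h hu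
  have hqv : q * v = q := by
    have := hq.mul_cfc_eq_zero (fun u => 1 - ramp t s' u) (by fun_prop)
      fun u hu => by rw [ramp_eq_one h hu, sub_self]
    rw [cfc_sub (fun _ => 1) (ramp t s') a, cfc_const_one ℝ a, ← hv, mul_sub, mul_one] at this
    exact (sub_eq_zero.1 this).symm
  have hvq : v * q = q := by
    have hvs : IsSelfAdjoint v := cfc_predicate _ _
    simpa [hvs.star_eq, hq.isStarProjection.isSelfAdjoint.star_eq] using congr(star $hqv)
  rw [← hvq, ← mul_assoc, hpv]

theorem commute (ha : IsSelfAdjoint a) (hp : IsSpectralCut a s t p)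
    (hq : IsSpectralCut a s' t' q) (h : t < s') : Commute p q := by
  have hpq := hp.mul_eq_right ha hq h
  have hqp : q * p = q := by
    simpa [hp.isStarProjection.isSelfAdjoint.star_eq, hq.isStarProjection.isSelfAdjoint.star_eq]
      using congr(star $hpq)
  exact hpq.trans hqp.symm

variable [PartialOrder B] [StarOrderedRing B]

theorem cfc_le (hp : IsSpectralCut a s t p) {f : ℝ → ℝ} (hf : Continuous f) (hf1 : ∀ u, f u ≤ 1)
    (hft : ∀ u ≤ t, f u = 0) : cfc f a ≤ p :=
  le_of_isStarProjection_of_mul_eq_right hp.isStarProjection (cfc_predicate _ _)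
    (cfc_le_one _ _ fun u _ => hf1 u) (hp.mul_cfc_eq_self f hf hft)

theorem le_cfc (ha : IsSelfAdjoint a) (hp : IsSpectralCut a s t p) {f : ℝ → ℝ} (hf : Continuous f)
    (hf0 : ∀ u, 0 ≤ f u) (hfs : ∀ u, s ≤ u → f u = 1) : p ≤ cfc f a := by
  have hzero := hp.mul_cfc_eq_zero (fun u => 1 - f u) (by fun_prop)
    fun u hu => by rw [hfs u hu, sub_self]
  rw [cfc_sub (fun _ => 1) f a, cfc_const_one ℝ a] at hzero
  have hself : IsSelfAdjoint (cfc f a) := cfc_predicate _ _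
  refine (sub_le_sub_iff_left 1).1 <|
    le_of_isStarProjection_of_mul_eq_right hp.isStarProjection.one_sub
      ((IsSelfAdjoint.one B).sub hself) (sub_le_self 1 (cfc_nonneg fun u _ => hf0 u)) ?_
  rw [sub_mul, hzero, one_mul, sub_zero]

end IsSpectralCut

variable {a : B} {s t : ℝ}

theorem cfc_ramp_mul_cfc_of_eq_zero_of_le {f : ℝ → ℝ} (hst : s < t) (hf : Continuous f)
    (hft : ∀ u ≤ t, f u = 0) : cfc (ramp s t) a * cfc f a = cfc f a := by
  rw [← cfc_mul _ _ a]
  refine cfc_congr fun u _ => ?_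
  rcases le_total u t with hu | hu
  · simp [hft u hu]
  · simp [ramp_eq_one hst hu]

theorem cfc_ramp_mul_cfc_of_eq_zero_of_ge {f : ℝ → ℝ} (hst : s < t) (hf : Continuous f)
    (hfs : ∀ u, s ≤ u → f u = 0) : cfc (ramp s t) a * cfc f a = 0 := by
  rw [← cfc_mul _ _ a, ← cfc_const_zero ℝ a]
  refine cfc_congr fun u _ => ?_
  rcases le_total u s with hu | hu
  · simp [ramp_eq_zero hst hu]
  · simp [hfs u hu]

theorem cfc_ramp_mul_one_sub_cfc_ramp {m : ℝ} (hsm : s < m) (hmt : m < t) :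
    cfc (ramp m t) a * (1 - cfc (ramp s m) a) = 0 := by
  rw [mul_sub, mul_one, (cfc_commute_cfc (ramp m t) (ramp s m) a).eq,
    cfc_ramp_mul_cfc_of_eq_zero_of_le hsm (continuous_ramp m t) fun u => ramp_eq_zero hmt,
    sub_self]

variable [PartialOrder B] [StarOrderedRing B]

theorem cfc_ramp_mem_Icc (a : B) (s t : ℝ) : cfc (ramp s t) a ∈ Set.Icc 0 1 :=
  ⟨cfc_nonneg fun u _ => ramp_nonneg s t u, cfc_le_one _ _ fun u _ => ramp_le_one s t u⟩

theorem norm_le_one_of_mem_Icc {x : B} (hx : x ∈ Set.Icc 0 1) : ‖x‖ ≤ 1 :=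
  (CStarAlgebra.norm_le_one_iff_of_nonneg x hx.1).2 hx.2

theorem exists_isSpectralCut_of_norm_lt {m : ℝ} (hsm : s < m) (hmt : m < t) {p : B}
    (hp : IsStarProjection p) (hpt : ‖(1 - p) * cfc (ramp m t) a‖ < 1 / 8)
    (hps : ‖p * (1 - cfc (ramp s m) a)‖ < 1 / 8) : ∃ q : B, IsSpectralCut a s t q := by
  have hx := cfc_ramp_mem_Icc a m t
  have hz := cfc_ramp_mem_Icc a s m
  obtain ⟨q, hq, hqv⟩ := exists_isStarProjection_separating (.of_nonneg hx.1)
    (.of_nonneg (sub_nonneg.2 hz.2)) (cfc_ramp_mul_one_sub_cfc_ramp hsm hmt)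
    (norm_le_one_of_mem_Icc (Set.sub_mem_Icc_zero_iff_right.2 hx))
    (by rw [sub_sub_cancel]; exact norm_le_one_of_mem_Icc hz) hp hpt hps
  refine ⟨q, hq, fun f hf hft => (hqv _).1 ?_, fun f hf hfs => (hqv _).2 ?_⟩
  · exact cfc_ramp_mul_cfc_of_eq_zero_of_le hmt hf hft
  · rw [sub_mul, one_mul, cfc_ramp_mul_cfc_of_eq_zero_of_ge hsm hf hfs, sub_zero]

theorem exists_isSpectralCut {A : StarSubalgebra ℂ B} (hA : IsClosed (A : Set B))
    (h : ∀ x ∈ A, ∀ y ∈ A, 0 ≤ x → 0 ≤ y → x * y = 0 → ∀ ε : ℝ, 0 < ε →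
      ∃ p : B, IsProjection p ∧ ‖p * x - x‖ ≤ ε ∧ ‖(1 - p) * y - y‖ ≤ ε)
    (haA : a ∈ A) (hst : s < t) : ∃ p : B, IsSpectralCut a s t p := by
  obtain ⟨m, hsm, hmt⟩ := exists_between hst
  have hmem (f : ℝ → ℝ) : cfc f a ∈ A := cfc_mem (𝕜' := ℂ) (hs := hA) f haA
  obtain ⟨p, hp, hpt, hps⟩ := h _ (hmem (ramp m t)) _ (sub_mem (one_mem A) (hmem (ramp s m)))
    (cfc_ramp_mem_Icc a m t).1 (sub_nonneg.2 (cfc_ramp_mem_Icc a s m).2)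
    (cfc_ramp_mul_one_sub_cfc_ramp hsm hmt) (1 / 16) (by norm_num)
  refine exists_isSpectralCut_of_norm_lt hsm hmt (isProjection_iff_isStarProjection.1 hp) ?_ ?_
  · rw [sub_mul, one_mul, norm_sub_rev]
    linarith
  · rw [sub_mul, one_mul, sub_sub_cancel_left, norm_neg] at hps
    linarith

end SpectralCut

section Approximation

variable {B : Type*} [CStarAlgebra B] {a : B} {c δ : ℝ} {p : ℕ → B}

theorem isSelfAdjoint_algebraMap_add_sum_smul {ι : Type*} {f : ι → B}
    (hf : ∀ i, IsSelfAdjoint (f i)) (c δ : ℝ) (s : Finset ι) :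
    IsSelfAdjoint (algebraMap ℝ B c + ∑ i ∈ s, δ • f i) :=
  (IsSelfAdjoint.algebraMap B (.all c)).add <|
    isSelfAdjoint_sum s fun i _ => (IsSelfAdjoint.all δ).smul (hf i)

theorem sum_smul_cfc_ramp (hδ : 0 < δ) (a : B) (c : ℝ) (n : ℕ) :
    ∑ j ∈ Finset.range n, δ • cfc (ramp (c + j * δ) (c + j * δ + δ)) a =
      cfc (fun u => max 0 (min (n * δ) (u - c))) a := by
  have hsum : (fun u => max 0 (min (n * δ) (u - c))) =
      ∑ j ∈ Finset.range n, fun u => δ * ramp (c + j * δ) (c + j * δ + δ) u := by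
    ext u
    rw [Finset.sum_apply, sum_mul_ramp hδ]
  rw [hsum, cfc_sum _ a]
  exact Finset.sum_congr rfl fun j _ => (cfc_const_mul δ _ a).symm

theorem finite_spectrum_sum_smul_of_isSpectralCut (ha : IsSelfAdjoint a) (hδ : 0 < δ)
    (hp : ∀ j : ℕ, IsSpectralCut a (c + j * δ) (c + j * δ + δ / 2) (p j)) (n : ℕ) :
    (spectrum ℂ (algebraMap ℝ B c + ∑ j ∈ Finset.range n, δ • p j)).Finite := by
  have hlt {i j : ℕ} (hij : i < j) : c + i * δ + δ / 2 < c + j * δ := by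
    have : (i + 1 : ℝ) * δ ≤ j * δ := by gcongr; exact_mod_cast hij
    linarith
  have hcomm (i j : ℕ) : Commute (p i) (p j) := by
    rcases lt_trichotomy i j with hij | rfl | hij
    · exact (hp i).commute ha (hp j) (hlt hij)
    · exact .refl _
    · exact ((hp j).commute ha (hp i) (hlt hij)).symm
  have hint : IsIntegral ℂ (∑ j ∈ Finset.range n, δ • p j) := by
    refine isIntegral_sum_of_commute _ (fun i j => ((hcomm i j).smul_left δ).smul_right δ) ?_
    intro j
    rw [← Complex.coe_smul]
    exact (isIntegral_of_isIdempotentElem (hp j).isStarProjection.isIdempotentElem).smul (δ : ℂ)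
  have hc : algebraMap ℝ B c = algebraMap ℂ B c := by
    rw [IsScalarTower.algebraMap_apply ℝ ℂ B, Complex.coe_algebraMap]
  rw [hc, ← spectrum.singleton_add_eq]
  exact (Set.finite_singleton _).add (finite_spectrum_of_isIntegral hint)

variable [PartialOrder B] [StarOrderedRing B]

theorem sum_smul_le_of_isSpectralCut (ha : IsSelfAdjoint a) (hδ : 0 < δ)
    (hp : ∀ j : ℕ, IsSpectralCut a (c + j * δ) (c + j * δ + δ / 2) (p j)) {n : ℕ}
    (hca : algebraMap ℝ B c ≤ a) :
    algebraMap ℝ B c + ∑ j ∈ Finset.range n, δ • p j ≤ a + algebraMap ℝ B δ := by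
  have hcut (j : ℕ) : p j ≤ cfc (ramp (c - δ + j * δ) (c - δ + j * δ + δ)) a :=
    (hp j).le_cfc ha (continuous_ramp _ _) (ramp_nonneg _ _) fun u hu =>
      ramp_eq_one (by linarith) (by linarith)
  calc algebraMap ℝ B c + ∑ j ∈ Finset.range n, δ • p j
      ≤ algebraMap ℝ B c +
          ∑ j ∈ Finset.range n, δ • cfc (ramp (c - δ + j * δ) (c - δ + j * δ + δ)) a := by
        gcongr with j
        exact hcut j
    _ = cfc (fun u => c + max 0 (min (n * δ) (u - (c - δ)))) a := by
        rw [sum_smul_cfc_ramp hδ, cfc_const_add c _ a]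
    _ ≤ cfc (fun u => u + δ) a := by
        refine cfc_mono fun u hu => ?_
        have := (algebraMap_le_iff_le_spectrum ha).1 hca u hu
        rw [← le_sub_iff_add_le', max_le_iff]
        exact ⟨by linarith, (min_le_right _ _).trans (by linarith)⟩
    _ = a + algebraMap ℝ B δ := by rw [cfc_add_const δ _ a, cfc_id' ℝ a]

theorem le_sum_smul_of_isSpectralCut (ha : IsSelfAdjoint a) (hδ : 0 < δ)
    (hp : ∀ j : ℕ, IsSpectralCut a (c + j * δ) (c + j * δ + δ / 2) (p j)) {n : ℕ}
    (han : a ≤ algebraMap ℝ B (c + n * δ)) :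
    a - algebraMap ℝ B δ ≤ algebraMap ℝ B c + ∑ j ∈ Finset.range n, δ • p j := by
  have hcut (j : ℕ) : cfc (ramp (c + δ + j * δ) (c + δ + j * δ + δ)) a ≤ p j :=
    (hp j).cfc_le (continuous_ramp _ _) (ramp_le_one _ _) fun u hu =>
      ramp_eq_zero (by linarith) (by linarith)
  calc a - algebraMap ℝ B δ = cfc (fun u => u - δ) a := by
        rw [cfc_sub (fun u => u) (fun _ => δ) a, cfc_id' ℝ a, cfc_const δ a]
    _ ≤ cfc (fun u => c + max 0 (min (n * δ) (u - (c + δ)))) a := by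
        refine cfc_mono fun u hu => ?_
        have := (le_algebraMap_iff_spectrum_le ha).1 han u hu
        rw [← sub_le_iff_le_add', le_max_iff, le_min_iff]
        exact Or.inr ⟨by linarith, by linarith⟩
    _ = algebraMap ℝ B c +
          ∑ j ∈ Finset.range n, δ • cfc (ramp (c + δ + j * δ) (c + δ + j * δ + δ)) a := by
        rw [sum_smul_cfc_ramp hδ, cfc_const_add c _ a]
    _ ≤ algebraMap ℝ B c + ∑ j ∈ Finset.range n, δ • p j := by
        gcongr with j
        exact hcut j

theorem norm_sub_sum_smul_le_of_isSpectralCut (ha : IsSelfAdjoint a) (hδ : 0 < δ)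
    (hp : ∀ j : ℕ, IsSpectralCut a (c + j * δ) (c + j * δ + δ / 2) (p j)) {n : ℕ}
    (hac : a ∈ Set.Icc (algebraMap ℝ B c) (algebraMap ℝ B (c + n * δ))) :
    ‖a - (algebraMap ℝ B c + ∑ j ∈ Finset.range n, δ • p j)‖ ≤ δ := by
  have hb := isSelfAdjoint_algebraMap_add_sum_smul
    (fun j => (hp j).isStarProjection.isSelfAdjoint) c δ (Finset.range n)
  refine norm_le_of_mem_Icc_algebraMap hδ.le (ha.sub hb) ⟨?_, ?_⟩
  · rw [neg_le_sub_iff_le_add]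
    exact sum_smul_le_of_isSpectralCut ha hδ hp hac.1
  · rw [sub_le_comm]
    exact le_sum_smul_of_isSpectralCut ha hδ hp hac.2

theorem exists_isSelfAdjoint_finite_spectrum_norm_sub_le (ha : IsSelfAdjoint a)
    (hcut : ∀ s t : ℝ, s < t → ∃ p, IsSpectralCut a s t p) {ε : ℝ} (hε : 0 < ε) :
    ∃ b : B, IsSelfAdjoint b ∧ (spectrum ℂ b).Finite ∧ ‖a - b‖ ≤ ε := by
  obtain ⟨M, hM⟩ := exists_nat_ge (‖a‖ / ε)
  rw [div_le_iff₀ hε] at hM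
  let c := -(M * ε)
  choose p hp using fun j : ℕ => hcut (c + j * ε) (c + j * ε + ε / 2) (by linarith)
  have hac : a ∈ Set.Icc (algebraMap ℝ B c) (algebraMap ℝ B (c + (2 * M : ℕ) * ε)) := by
    constructor
    · calc algebraMap ℝ B c ≤ algebraMap ℝ B (-‖a‖) := algebraMap_mono B (neg_le_neg hM)
        _ = -algebraMap ℝ B ‖a‖ := map_neg _ _
        _ ≤ a := ha.neg_algebraMap_norm_le_self
    · refine ha.le_algebraMap_norm_self.trans (algebraMap_mono B ?_)
      push_cast
      linarith
  exact ⟨algebraMap ℝ B c + ∑ j ∈ Finset.range (2 * M), ε • p j,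
    isSelfAdjoint_algebraMap_add_sum_smul (fun j => (hp j).isStarProjection.isSelfAdjoint) _ _ _,
    finite_spectrum_sum_smul_of_isSpectralCut ha hε hp _,
    norm_sub_sum_smul_le_of_isSpectralCut ha hε hp hac⟩

end Approximation

theorem stmt4 {B : Type*} [CStarAlgebra B] [PartialOrder B] [StarOrderedRing B]
    (A : StarSubalgebra ℂ B) (hA : IsClosed (A : Set B))
    (h : ∀ x ∈ A, ∀ y ∈ A, 0 ≤ x → 0 ≤ y → x * y = 0 → ∀ ε : ℝ, 0 < ε →
      ∃ p : B, IsProjection p ∧ ‖p * x - x‖ ≤ ε ∧ ‖(1 - p) * y - y‖ ≤ ε) :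
    ∀ a ∈ A, IsSelfAdjoint a → ∀ ε : ℝ, 0 < ε →
      ∃ b : B, IsSelfAdjoint b ∧ (spectrum ℂ b).Finite ∧ ‖a - b‖ ≤ ε := by
  intro a haA ha ε hε
  have hcut : ∀ s t : ℝ, s < t → ∃ p, IsSpectralCut a s t p :=
    fun _ _ hst => exists_isSpectralCut hA h haA hst
  exact exists_isSelfAdjoint_finite_spectrum_norm_sub_le ha hcut hε
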